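/- Fix an integer m ≥ 2 and set δ = Δ/2^n. There is a constant C > 0, depending only on n, Δ and m, with the following property: for every t ∈ 𝒜_m, every monic real polynomial P(y) = y^n + a_{n−1}y^{n−1} + ⋯ + a₀ of degree n, every real x, and all reals K, L with m < K and K + m < L, one has | Σ_{K < k ≤ L} e(t·P(k) + x·k)/k | ≤ C·( K^{−δ} + L^{−δ} ), the sum being over integers k with K < k ≤ L. -/

import Mathlib

open Filter Finset MeasureTheory

/-- An approximant to a real number `t`: a reduced fraction `u/q` with `q ≥ 1`
and `|t - u/q| < 1/q²`. -/
def IsApproximant (t : ℝ) (u q : ℤ) : Prop :=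
  1 ≤ q ∧ Int.gcd u q = 1 ∧ |t - (u : ℝ) / (q : ℝ)| < 1 / (q : ℝ) ^ 2

/-- The set `𝒜_m`: `t ∈ [0,1]` such that for every real `M ≥ m` there is an
approximant `u/q` to `t` with `M^Δ < q ≤ M^(n-Δ)`. -/
def Aset (n : ℕ) (Δ : ℝ) (m : ℤ) : Set ℝ :=
  {t | t ∈ Set.Icc (0 : ℝ) 1 ∧ ∀ M : ℝ, (m : ℝ) ≤ M →
    ∃ u q : ℤ, IsApproximant t u q ∧ M ^ Δ < (q : ℝ) ∧ (q : ℝ) ≤ M ^ ((n : ℝ) - Δ)}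

/-- The set `𝒜`: `t ∈ [0,1]` such that for all sufficiently large `M` there is an
approximant `u/q` to `t` with `M^Δ < q ≤ M^(n-Δ)`. -/
def Aall (n : ℕ) (Δ : ℝ) : Set ℝ :=
  {t | t ∈ Set.Icc (0 : ℝ) 1 ∧ ∃ M₀ : ℝ, ∀ M : ℝ, M₀ ≤ M →
    ∃ u q : ℤ, IsApproximant t u q ∧ M ^ Δ < (q : ℝ) ∧ (q : ℝ) ≤ M ^ ((n : ℝ) - Δ)}

/-- The set `ℬ_{m,α}`: `t ∈ (0,1]` such that for every real `M ≥ m·t^(-α)` there is an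
approximant `u/q` to `t` with `M^Δ < q ≤ M^(n-Δ)`. -/
def Bset (n : ℕ) (Δ : ℝ) (m : ℤ) (α : ℝ) : Set ℝ :=
  {t | t ∈ Set.Ioc (0 : ℝ) 1 ∧ ∀ M : ℝ, (m : ℝ) * t ^ (-α) ≤ M →
    ∃ u q : ℤ, IsApproximant t u q ∧ M ^ Δ < (q : ℝ) ∧ (q : ℝ) ≤ M ^ ((n : ℝ) - Δ)}

/-- `e(ξ) = exp(2πiξ)`. -/
noncomputable def ee (ξ : ℝ) : ℂ := Complex.exp (2 * Real.pi * Complex.I * ξ)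

/-
Taking squares `d` times replaces a polynomial phase of degree `d + 1` and leading coefficient `t`
by the linear phases with slopes `(d + 1)! * h₁ * ⋯ * h_d * t`, whose exponential sums are
geometric. Every nonzero product of shifts is attained at most `N ^ ε` times by the divisor bound,
so these geometric sums are controlled by the multiples `w * t` with `w ≪ N ^ d`, and an
approximant `u / q` to `t` spaces any `q` consecutive ones like the residues modulo `q`. This is
Weyl's inequality, which saves a power of `N` when `N ^ Δ < q ≤ N ^ (d + 1 - Δ)`.

The hypothesis on `t` supplies such a `q` for every length `N ≥ m`. As the estimate depends only
on the leading coefficient, it is not affected by translating the polynomial: every partial sum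
starting at `K` is small in terms of its own length `j`, with no regard to the size of `K`.
Summation by parts against `1 / k` then gives a bound `K ^ (-δ)`.
-/

section DivisorBound

theorem natCast_add_one_le_mul_pow {y : ℝ} (hy : 1 < y) (v : ℕ) :
    (v : ℝ) + 1 ≤ (1 + (y - 1)⁻¹) * y ^ v := by
  have hy' : 0 < y - 1 := sub_pos.mpr hy
  calc (v : ℝ) + 1 ≤ (1 + (y - 1)⁻¹) * (1 + v * (y - 1)) := by
        have : (1 + (y - 1)⁻¹) * (1 + v * (y - 1)) = v + 1 + v * (y - 1) + (y - 1)⁻¹ := by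
          field_simp
          ring
        rw [this]
        have : 0 ≤ v * (y - 1) + (y - 1)⁻¹ := by positivity
        linarith
    _ ≤ (1 + (y - 1)⁻¹) * y ^ v := by
        gcongr
        exact one_add_mul_sub_le_pow (by linarith) v

theorem natCast_eq_prod_primeFactors_rpow {n : ℕ} (hn : n ≠ 0) (ε : ℝ) :
    (n : ℝ) ^ ε = ∏ p ∈ n.primeFactors, ((p : ℝ) ^ ε) ^ n.factorization p := by
  conv_lhs => rw [← Nat.prod_factorization_pow_eq_self hn]
  rw [Finsupp.prod, Nat.support_factorization, Nat.cast_prod,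
    ← Real.finsetProd_rpow _ _ fun _ _ => by positivity]
  refine prod_congr rfl fun p _ => ?_
  rw [Nat.cast_pow, Real.rpow_pow_comm p.cast_nonneg]

-- Only the primes `p` with `p ^ ε < 2` contribute a factor larger than `1` to `d(n) / n ^ ε`.
theorem exists_card_divisors_le_mul_rpow {ε : ℝ} (hε : 0 < ε) :
    ∃ C : ℝ, 1 ≤ C ∧ ∀ n : ℕ, (#n.divisors : ℝ) ≤ C * (n : ℝ) ^ ε := by
  have h2ε : 1 < (2 : ℝ) ^ ε := Real.one_lt_rpow one_lt_two hε
  set A : ℝ := 1 + ((2 : ℝ) ^ ε - 1)⁻¹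
  have hA : 1 ≤ A := by simpa [A] using h2ε.le
  obtain ⟨P, hP⟩ := exists_nat_gt ((2 : ℝ) ^ (1 / ε))
  refine ⟨A ^ P, one_le_pow₀ hA, fun n => ?_⟩
  rcases eq_or_ne n 0 with rfl | hn
  · simp [Real.zero_rpow hε.ne']
  have prime_factor (p : ℕ) (hp : p ∈ n.primeFactors) : (n.factorization p : ℝ) + 1 ≤
      (if p < P then A else 1) * ((p : ℝ) ^ ε) ^ n.factorization p := by
    split_ifs with hpP
    · have hp2 : (2 : ℝ) ≤ p := mod_cast (Nat.prime_of_mem_primeFactors hp).two_le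
      exact (natCast_add_one_le_mul_pow h2ε _).trans (by gcongr)
    · have h2 : (2 : ℝ) ≤ (p : ℝ) ^ ε := by
        rw [← Real.rpow_inv_le_iff_of_pos zero_le_two p.cast_nonneg hε, inv_eq_one_div]
        exact hP.le.trans (mod_cast not_lt.mp hpP)
      calc (n.factorization p : ℝ) + 1 ≤ 2 ^ n.factorization p :=
            mod_cast Nat.lt_two_pow_self
        _ ≤ 1 * ((p : ℝ) ^ ε) ^ n.factorization p := by
            rw [one_mul]
            gcongr
  have small_primes : ∏ p ∈ n.primeFactors, (if p < P then A else 1) ≤ A ^ P := by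
    rw [prod_ite, prod_const_one, mul_one, prod_const]
    refine pow_le_pow_right₀ hA ?_
    calc #{p ∈ n.primeFactors | p < P} ≤ #(range P) :=
          card_le_card fun p hp => mem_range.mpr (mem_filter.mp hp).2
      _ = P := card_range P
  rw [Nat.card_divisors hn, natCast_eq_prod_primeFactors_rpow hn]
  push_cast
  calc ∏ p ∈ n.primeFactors, ((n.factorization p : ℝ) + 1)
      ≤ ∏ p ∈ n.primeFactors,
          (if p < P then A else 1) * ((p : ℝ) ^ ε) ^ n.factorization p :=
        prod_le_prod (fun _ _ => by positivity) prime_factor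
    _ ≤ A ^ P * ∏ p ∈ n.primeFactors, ((p : ℝ) ^ ε) ^ n.factorization p := by
        rw [prod_mul_distrib]
        gcongr

end DivisorBound

section PartialSummation

variable {E : Type*} [SeminormedAddCommGroup E] [NormedSpace ℝ E]

theorem norm_sum_range_smul_le_of_antitone {c : ℕ → ℝ} (hc : Antitone c) (hc0 : ∀ i, 0 ≤ c i)
    {f : ℕ → E} {B : ℕ → ℝ} (hB : ∀ j, ‖∑ i ∈ range j, f i‖ ≤ B j) (J : ℕ) :
    ‖∑ i ∈ range (J + 1), c i • f i‖ ≤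
      c J * B (J + 1) + ∑ i ∈ range J, (c i - c (i + 1)) * B (i + 1) := by
  have hstep (i : ℕ) : 0 ≤ c i - c (i + 1) := sub_nonneg.mpr (hc i.le_succ)
  rw [sum_range_by_parts, Nat.add_sub_cancel]
  refine (norm_sub_le _ _).trans
    (add_le_add ?_ ((norm_sum_le _ _).trans (sum_le_sum fun i _ => ?_)))
  · rw [norm_smul, Real.norm_of_nonneg (hc0 J)]
    exact mul_le_mul_of_nonneg_left (hB _) (hc0 J)
  · rw [norm_smul, norm_sub_rev, Real.norm_of_nonneg (hstep i)]
    exact mul_le_mul_of_nonneg_left (hB _) (hstep i)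

theorem rpow_neg_div_add_one_le {δ y : ℝ} (hδ0 : 0 < δ) (hδ1 : δ ≤ 1) (hy : 0 < y) :
    y ^ (-δ) / (y + 1) ≤ (y ^ (-δ) - (y + 1) ^ (-δ)) / δ := by
  have bernoulli : (y / (y + 1)) ^ δ ≤ 1 - δ / (y + 1) := by
    have h := rpow_one_add_le_one_add_mul_self (s := -(y + 1)⁻¹) (p := δ)
      (neg_le_neg (inv_le_one_of_one_le₀ (by linarith))) hδ0.le hδ1
    calc (y / (y + 1)) ^ δ = (1 + -(y + 1)⁻¹) ^ δ := by
          congr 1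
          field_simp
          ring
      _ ≤ 1 + δ * -(y + 1)⁻¹ := h
      _ = 1 - δ / (y + 1) := by ring
  have shift : (y + 1) ^ (-δ) = y ^ (-δ) * (y / (y + 1)) ^ δ := by
    rw [Real.div_rpow hy.le (by positivity), Real.rpow_neg hy.le, Real.rpow_neg (by positivity)]
    have : y ^ δ ≠ 0 := by positivity
    field_simp
  rw [le_div_iff₀ hδ0, shift]
  calc y ^ (-δ) / (y + 1) * δ = y ^ (-δ) - y ^ (-δ) * (1 - δ / (y + 1)) := by ring
    _ ≤ y ^ (-δ) - y ^ (-δ) * (y / (y + 1)) ^ δ := by gcongr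

theorem inv_mul_rpow_one_sub_le {δ s y : ℝ} (hδ1 : δ ≤ 1) (hs : 0 ≤ s) (hsy : s ≤ y) (hy : 0 < y) :
    y⁻¹ * s ^ (1 - δ) ≤ y ^ (-δ) := by
  calc y⁻¹ * s ^ (1 - δ) ≤ y⁻¹ * y ^ (1 - δ) := by gcongr
    _ = y ^ (-δ) := by
      rw [← Real.rpow_neg_one, ← Real.rpow_add hy]
      congr 1
      ring

theorem inv_sub_inv_mul_rpow_one_sub_le {δ s y : ℝ} (hδ0 : 0 < δ) (hδ1 : δ ≤ 1) (hs : 0 ≤ s)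
    (hsy : s ≤ y) (hy : 0 < y) :
    (y⁻¹ - (y + 1)⁻¹) * s ^ (1 - δ) ≤ (y ^ (-δ) - (y + 1) ^ (-δ)) / δ := by
  calc (y⁻¹ - (y + 1)⁻¹) * s ^ (1 - δ) = y⁻¹ * s ^ (1 - δ) / (y + 1) := by
        field_simp
        ring
    _ ≤ y ^ (-δ) / (y + 1) := by
        gcongr
        exact inv_mul_rpow_one_sub_le hδ1 hs hsy hy
    _ ≤ (y ^ (-δ) - (y + 1) ^ (-δ)) / δ := rpow_neg_div_add_one_le hδ0 hδ1 hy

theorem norm_sum_range_inv_smul_le {δ C y : ℝ} (hδ0 : 0 < δ) (hδ1 : δ ≤ 1) (hC : 0 ≤ C)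
    (hy : 1 ≤ y) {f : ℕ → E} (hf : ∀ j : ℕ, ‖∑ i ∈ range j, f i‖ ≤ C * (j : ℝ) ^ (1 - δ)) (J : ℕ) :
    ‖∑ i ∈ range J, (y + i)⁻¹ • f i‖ ≤ C / δ * y ^ (-δ) := by
  have hy0 (i : ℕ) : 0 < y + i := by positivity
  have hsucc_le (i : ℕ) : ((i + 1 : ℕ) : ℝ) ≤ y + i := by push_cast; linarith
  rcases J with _ | J
  · simp only [range_zero, sum_empty, norm_zero]
    positivity
  set g : ℕ → ℝ := fun i => (y + i) ^ (-δ)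
  have hmono : Antitone fun i : ℕ => (y + i)⁻¹ := fun i j hij => by
    have := hy0 i
    dsimp only
    gcongr
  have last_term : (y + J)⁻¹ * (C * ((J + 1 : ℕ) : ℝ) ^ (1 - δ)) ≤ C / δ * g J := by
    calc (y + J)⁻¹ * (C * ((J + 1 : ℕ) : ℝ) ^ (1 - δ))
        = C * ((y + J)⁻¹ * ((J + 1 : ℕ) : ℝ) ^ (1 - δ)) := by ring
      _ ≤ C * g J := mul_le_mul_of_nonneg_left
          (inv_mul_rpow_one_sub_le hδ1 (by positivity) (hsucc_le J) (hy0 J)) hC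
      _ ≤ C / δ * g J :=
          mul_le_mul_of_nonneg_right (le_div_self hC hδ0 hδ1) (Real.rpow_nonneg (hy0 J).le _)
  have difference_term (i : ℕ) :
      ((y + i)⁻¹ - (y + (i + 1 : ℕ))⁻¹) * (C * ((i + 1 : ℕ) : ℝ) ^ (1 - δ)) ≤
        C / δ * (g i - g (i + 1)) := by
    have := mul_le_mul_of_nonneg_left
      (inv_sub_inv_mul_rpow_one_sub_le hδ0 hδ1 (by positivity) (hsucc_le i) (hy0 i)) hC
    simp only [g, Nat.cast_succ, ← add_assoc] at this ⊢
    linear_combination this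
  calc ‖∑ i ∈ range (J + 1), (y + i)⁻¹ • f i‖
      ≤ (y + J)⁻¹ * (C * ((J + 1 : ℕ) : ℝ) ^ (1 - δ)) + ∑ i ∈ range J,
          ((y + i)⁻¹ - (y + (i + 1 : ℕ))⁻¹) * (C * ((i + 1 : ℕ) : ℝ) ^ (1 - δ)) :=
        norm_sum_range_smul_le_of_antitone hmono (fun i => (inv_pos.mpr (hy0 i)).le) hf J
    _ ≤ C / δ * g J + ∑ i ∈ range J, C / δ * (g i - g (i + 1)) :=
        add_le_add last_term (sum_le_sum fun i _ => difference_term i)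
    _ = C / δ * g 0 := by rw [← mul_sum, sum_range_sub', ← mul_add, add_sub_cancel]
    _ = C / δ * y ^ (-δ) := by simp only [g, Nat.cast_zero, add_zero]

end PartialSummation

section ExponentialSums

theorem ee_eq_fourierChar (a : ℝ) : ee a = Real.fourierChar a := by
  rw [ee, Real.fourierChar_apply]
  push_cast
  ring_nf

theorem norm_ee (a : ℝ) : ‖ee a‖ = 1 := by
  rw [ee_eq_fourierChar, Circle.norm_coe]

theorem ee_add (a b : ℝ) : ee (a + b) = ee a * ee b := by
  simp only [ee_eq_fourierChar, AddChar.map_add_eq_mul, Circle.coe_mul]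

theorem ee_natCast_mul (k : ℕ) (a : ℝ) : ee (k * a) = ee a ^ k := by
  simp only [ee_eq_fourierChar, ← nsmul_eq_mul, AddChar.map_nsmul_eq_pow, Circle.coe_pow]

theorem ee_sub (a b : ℝ) : ee (a - b) = ee a * (starRingEnd ℂ) (ee b) := by
  simp only [ee_eq_fourierChar, sub_eq_add_neg, AddChar.map_add_eq_mul, AddChar.map_neg_eq_inv,
    Circle.coe_mul, Circle.coe_inv_eq_conj]

theorem ee_intCast (z : ℤ) : ee z = 1 := by
  rw [ee, Complex.exp_eq_one_iff]
  exact ⟨z, by push_cast; ring⟩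

theorem norm_sum_range_ee_le (φ : ℕ → ℝ) (M : ℕ) : ‖∑ k ∈ range M, ee (φ k)‖ ≤ M := by
  simpa [norm_ee] using norm_sum_le (range M) fun k => ee (φ k)

theorem four_mul_norm_le_norm_ee_sub_one (a : ℝ) : 4 * ‖(a : UnitAddCircle)‖ ≤ ‖ee a - 1‖ := by
  set y := a - round a with hy
  have hπ := Real.pi_pos
  have reduce : ee a = Complex.exp (Complex.I * ((2 * Real.pi * y : ℝ) : ℂ)) := by
    rw [show a = y + (round a : ℤ) by simp [hy], ee_add, ee_intCast, mul_one, ee]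
    congr 1
    push_cast
    ring
  have jordan : 2 / Real.pi * |Real.pi * y| ≤ |Real.sin (Real.pi * y)| :=
    Real.mul_abs_le_abs_sin (by
      rw [abs_mul, abs_of_pos hπ]
      nlinarith [abs_sub_round a])
  rw [UnitAddCircle.norm_eq, ← hy, reduce, Complex.norm_exp_I_mul_ofReal_sub_one, norm_mul,
    Real.norm_eq_abs, Real.norm_eq_abs, abs_two, show 2 * Real.pi * y / 2 = Real.pi * y by ring]
  calc 4 * |y| = 2 * (2 / Real.pi * |Real.pi * y|) := by
        rw [abs_mul, abs_of_pos hπ]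
        field_simp
        ring
    _ ≤ 2 * |Real.sin (Real.pi * y)| := by gcongr

/-- The size `N / (1 + N ‖a‖)` of a geometric sum of `N` terms with ratio `ee a`, where `‖a‖` is the
distance from `a` to the nearest integer. It is comparable to `min N ‖a‖⁻¹`, but has no junk value
at integral `a`. -/
noncomputable def geomBound (N : ℕ) (a : ℝ) : ℝ := N / (1 + N * ‖(a : UnitAddCircle)‖)

theorem geomBound_nonneg (N : ℕ) (a : ℝ) : 0 ≤ geomBound N a := by
  unfold geomBound
  positivity

theorem geomBound_le_natCast (N : ℕ) (a : ℝ) : geomBound N a ≤ N :=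
  div_le_self N.cast_nonneg (le_add_of_nonneg_right (by positivity))

theorem geomBound_le_inv (N : ℕ) {a x : ℝ} (hx : 0 < x) (h : x ≤ ‖(a : UnitAddCircle)‖) :
    geomBound N a ≤ x⁻¹ := by
  rw [geomBound, div_le_iff₀ (by positivity), inv_mul_eq_div, le_div_iff₀ hx]
  have : (N : ℝ) * x ≤ N * ‖(a : UnitAddCircle)‖ := by gcongr
  linarith

theorem norm_sum_range_ee_linear_le {M N : ℕ} (hMN : M ≤ N) (a b : ℝ) :
    ‖∑ k ∈ range M, ee (a * k + b)‖ ≤ 2 * geomBound N a := by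
  set G := ∑ k ∈ range M, ee a ^ k
  have factor : ∑ k ∈ range M, ee (a * k + b) = G * ee b := by
    rw [sum_mul]
    exact sum_congr rfl fun k _ => by rw [ee_add, mul_comm a, ee_natCast_mul]
  have trivial_bound : ‖G‖ ≤ N := by
    have : ‖G‖ ≤ M := by simpa [G, ee_natCast_mul] using norm_sum_range_ee_le (fun k => k * a) M
    exact this.trans (mod_cast hMN)
  have geometric_bound : ‖G‖ * (4 * ‖(a : UnitAddCircle)‖) ≤ 2 := by
    calc ‖G‖ * (4 * ‖(a : UnitAddCircle)‖) ≤ ‖G‖ * ‖ee a - 1‖ := by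
          gcongr
          exact four_mul_norm_le_norm_ee_sub_one a
      _ = ‖ee a ^ M - 1‖ := by rw [← norm_mul, geom_sum_mul]
      _ ≤ ‖ee a ^ M‖ + ‖(1 : ℂ)‖ := norm_sub_le _ _
      _ = 2 := by rw [norm_pow, norm_ee, one_pow, norm_one, one_add_one_eq_two]
  rw [factor, norm_mul, norm_ee, mul_one, geomBound, ← mul_div_assoc, le_div_iff₀ (by positivity)]
  have : (N : ℝ) * (‖G‖ * (4 * ‖(a : UnitAddCircle)‖)) ≤ N * 2 := by gcongr
  nlinarith

end ExponentialSums

section WeylDifferencing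

open scoped Polynomial

-- Expanding the square, the correlation at shift `h` collects the pairs of indices with
-- difference `h`; the diagonal `h = 0` is counted twice.
theorem norm_sum_range_sq_le (𝕜 : Type*) {E : Type*} [RCLike 𝕜] [SeminormedAddCommGroup E]
    [InnerProductSpace 𝕜 E] (z : ℕ → E) (M : ℕ) :
    ‖∑ k ∈ range M, z k‖ ^ 2 ≤
      2 * ∑ h ∈ range M, ‖∑ k ∈ range (M - h), inner 𝕜 (z k) (z (k + h))‖ := by
  set S : ℕ → E := fun M => ∑ k ∈ range M, z k
  set T : ℕ → 𝕜 := fun M => ∑ h ∈ range M, ∑ k ∈ range (M - h), inner 𝕜 (z k) (z (k + h))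
  have T_succ (M : ℕ) : T (M + 1) = T M + inner 𝕜 (S (M + 1)) (z M) := by
    have last (h : ℕ) (hh : h ∈ range (M + 1)) :
        ∑ k ∈ range (M + 1 - h), inner 𝕜 (z k) (z (k + h)) =
          ∑ k ∈ range (M - h), inner 𝕜 (z k) (z (k + h)) + inner 𝕜 (z (M - h)) (z M) := by
      have hM : h ≤ M := Nat.lt_succ_iff.mp (mem_range.mp hh)
      rw [Nat.succ_sub hM, sum_range_succ, Nat.sub_add_cancel hM]
    have reflect := sum_range_reflect (fun j => inner 𝕜 (z j) (z M)) (M + 1)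
    rw [Nat.add_sub_cancel] at reflect
    rw [sum_inner, ← reflect]
    simp only [T, sum_congr rfl last, sum_add_distrib]
    rw [sum_range_succ, Nat.sub_self, range_zero, sum_empty, add_zero]
  have key (M : ℕ) : ‖S M‖ ^ 2 ≤ 2 * RCLike.re (T M) := by
    induction M with
    | zero => simp [S, T]
    | succ M ih =>
      have expand := norm_add_sq (𝕜 := 𝕜) (S M) (z M)
      have hS : S (M + 1) = S M + z M := sum_range_succ z M
      rw [T_succ, hS, inner_add_left, map_add, map_add, inner_self_eq_norm_sq, expand]
      linarith [sq_nonneg ‖z M‖]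
  refine (key M).trans ?_
  gcongr
  exact (RCLike.re_le_norm _).trans (norm_sum_le _ _)

theorem coeff_taylor_of_natDegree_le {R : Type*} [CommSemiring R] {n : ℕ} {Q : R[X]}
    (hQ : Q.natDegree ≤ n) (h : R) : (Polynomial.taylor h Q).coeff n = Q.coeff n := by
  rcases hQ.eq_or_lt with rfl | hQ
  · rw [Polynomial.coeff_taylor_natDegree, Polynomial.leadingCoeff]
  · rw [Polynomial.coeff_eq_zero_of_natDegree_lt ((Polynomial.natDegree_taylor Q h).trans_lt hQ),
      Polynomial.coeff_eq_zero_of_natDegree_lt hQ]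

theorem natDegree_taylor_sub_self_le {R : Type*} [CommRing R] {d : ℕ} {Q : R[X]}
    (hQ : Q.natDegree ≤ d + 1) (h : R) : (Polynomial.taylor h Q - Q).natDegree ≤ d := by
  rw [Polynomial.natDegree_le_iff_coeff_eq_zero]
  intro k hk
  rw [Polynomial.coeff_sub, coeff_taylor_of_natDegree_le (hQ.trans hk), sub_self]

theorem coeff_taylor_sub_self {R : Type*} [CommRing R] {d : ℕ} {Q : R[X]}
    (hQ : Q.natDegree ≤ d + 1) (h : R) :
    (Polynomial.taylor h Q - Q).coeff d = (d + 1) * h * Q.coeff (d + 1) := by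
  have hdeg : (Polynomial.hasseDeriv d Q).natDegree < 2 :=
    (Polynomial.natDegree_hasseDeriv_le Q d).trans_lt (by lia)
  rw [Polynomial.coeff_sub, Polynomial.taylor_coeff, Polynomial.eval_eq_sum_range' hdeg,
    sum_range_succ, sum_range_one, Polynomial.hasseDeriv_coeff, Polynomial.hasseDeriv_coeff,
    zero_add, add_comm 1 d, Nat.choose_self, Nat.choose_succ_self_right]
  push_cast
  ring

theorem norm_sum_range_ee_eval_sq_le (Q : ℝ[X]) (M : ℕ) :
    ‖∑ k ∈ range M, ee (Q.eval (k : ℝ))‖ ^ 2 ≤ 2 * ∑ h ∈ range M,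
      ‖∑ k ∈ range (M - h), ee ((Polynomial.taylor (h : ℝ) Q - Q).eval (k : ℝ))‖ := by
  simp only [Polynomial.eval_sub, Polynomial.taylor_eval, ee_sub, ← Nat.cast_add]
  exact norm_sum_range_sq_le ℂ (fun k : ℕ => ee (Q.eval (k : ℝ))) M

/-- The majorant of a Weyl sum of degree `d + 1` and length `N` with leading coefficient `a`
produced by `d` differencing steps: the sum of `geomBound N ((d + 1)! * h₁ * ⋯ * h_d * a)` over all
shifts `0 ≤ h₁, …, h_d < N`. -/
noncomputable def weylMajorant (N : ℕ) : ℕ → ℝ → ℝ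
  | 0, a => geomBound N a
  | d + 1, a => ∑ h ∈ range N, weylMajorant N d ((d + 2) * h * a)

theorem weylMajorant_le_pow (N d : ℕ) (a : ℝ) : weylMajorant N d a ≤ (N : ℝ) ^ (d + 1) := by
  induction d generalizing a with
  | zero => simpa [weylMajorant] using geomBound_le_natCast N a
  | succ d ih =>
    calc weylMajorant N (d + 1) a ≤ ∑ _h ∈ range N, (N : ℝ) ^ (d + 1) :=
          sum_le_sum fun _ _ => ih _
      _ = (N : ℝ) ^ (d + 2) := by rw [sum_const, card_range, nsmul_eq_mul, ← pow_succ']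

theorem weylMajorant_nonneg (N d : ℕ) (a : ℝ) : 0 ≤ weylMajorant N d a := by
  induction d generalizing a with
  | zero => exact geomBound_nonneg N a
  | succ d ih => exact sum_nonneg fun _ _ => ih _

theorem pow_sum_mul_card_le {ι : Type*} (s : Finset ι) {f : ι → ℝ} (hf : ∀ i ∈ s, 0 ≤ f i)
    (m : ℕ) : (∑ i ∈ s, f i) ^ m * #s ≤ (#s : ℝ) ^ m * ∑ i ∈ s, f i ^ m := by
  rcases m with _ | m
  · simp
  rcases s.eq_empty_or_nonempty with rfl | hs
  · simp
  have : (0 : ℝ) < #s := mod_cast hs.card_pos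
  have := pow_sum_div_card_le_sum_pow hf m
  rw [div_le_iff₀ (by positivity)] at this
  calc (∑ i ∈ s, f i) ^ (m + 1) * #s ≤ (∑ i ∈ s, f i ^ (m + 1)) * (#s : ℝ) ^ m * #s := by gcongr
    _ = (#s : ℝ) ^ (m + 1) * ∑ i ∈ s, f i ^ (m + 1) := by ring

theorem pow_norm_sum_range_ee_eval_mul_le {M N : ℕ} (hMN : M ≤ N) (Q : ℝ[X]) (m : ℕ) :
    ‖∑ k ∈ range M, ee (Q.eval (k : ℝ))‖ ^ (2 * m) * N ≤ (2 * N : ℝ) ^ m * ∑ h ∈ range N,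
      ‖∑ k ∈ range (M - h), ee ((Polynomial.taylor (h : ℝ) Q - Q).eval (k : ℝ))‖ ^ m := by
  set S := ‖∑ k ∈ range M, ee (Q.eval (k : ℝ))‖
  set T : ℕ → ℝ := fun h =>
    ‖∑ k ∈ range (M - h), ee ((Polynomial.taylor (h : ℝ) Q - Q).eval (k : ℝ))‖
  have differencing : S ^ 2 ≤ 2 * ∑ h ∈ range N, T h := by
    refine (norm_sum_range_ee_eval_sq_le Q M).trans ?_
    gcongr
  have power_mean := pow_sum_mul_card_le (range N) (f := T) (fun _ _ => norm_nonneg _) m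
  rw [card_range] at power_mean
  calc S ^ (2 * m) * N = (S ^ 2) ^ m * N := by rw [pow_mul]
    _ ≤ (2 * ∑ h ∈ range N, T h) ^ m * N := by gcongr
    _ = 2 ^ m * ((∑ h ∈ range N, T h) ^ m * N) := by ring
    _ ≤ 2 ^ m * ((N : ℝ) ^ m * ∑ h ∈ range N, T h ^ m) := by gcongr
    _ = (2 * N : ℝ) ^ m * ∑ h ∈ range N, T h ^ m := by ring

theorem pow_norm_sum_range_ee_eval_le {M N d : ℕ} (hMN : M ≤ N) {Q : ℝ[X]}
    (hQ : Q.natDegree ≤ d + 1) :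
    ‖∑ k ∈ range M, ee (Q.eval (k : ℝ))‖ ^ 2 ^ d * (N : ℝ) ^ (d + 1) ≤
      (2 * N : ℝ) ^ 2 ^ d * weylMajorant N d (Q.coeff (d + 1)) := by
  induction d generalizing Q M with
  | zero =>
    have linear (k : ℕ) : Q.eval (k : ℝ) = Q.coeff 1 * k + Q.coeff 0 := by
      rw [Polynomial.eval_eq_sum_range' (n := 2) (by lia), sum_range_succ, sum_range_one]
      ring
    have := norm_sum_range_ee_linear_le hMN (Q.coeff 1) (Q.coeff 0)
    simp only [linear, pow_zero, zero_add, pow_one, weylMajorant]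
    calc _ ≤ 2 * geomBound N (Q.coeff 1) * N := by gcongr
      _ = 2 * N * geomBound N (Q.coeff 1) := by ring
  | succ d ih =>
    set T : ℕ → ℝ := fun h =>
      ‖∑ k ∈ range (M - h), ee ((Polynomial.taylor (h : ℝ) Q - Q).eval (k : ℝ))‖
    have induction_step (h : ℕ) : T h ^ 2 ^ d * (N : ℝ) ^ (d + 1) ≤
        (2 * N : ℝ) ^ 2 ^ d * weylMajorant N d ((d + 2) * h * Q.coeff (d + 2)) := by
      have := ih ((Nat.sub_le M h).trans hMN) (natDegree_taylor_sub_self_le hQ (h : ℝ))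
      rwa [coeff_taylor_sub_self hQ, Nat.cast_succ, add_assoc, one_add_one_eq_two] at this
    calc ‖∑ k ∈ range M, ee (Q.eval (k : ℝ))‖ ^ 2 ^ (d + 1) * (N : ℝ) ^ (d + 2)
        = ‖∑ k ∈ range M, ee (Q.eval (k : ℝ))‖ ^ (2 * 2 ^ d) * N * (N : ℝ) ^ (d + 1) := by ring
      _ ≤ (2 * N : ℝ) ^ 2 ^ d * (∑ h ∈ range N, T h ^ 2 ^ d) * (N : ℝ) ^ (d + 1) :=
          mul_le_mul_of_nonneg_right (pow_norm_sum_range_ee_eval_mul_le hMN Q _) (by positivity)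
      _ = (2 * N : ℝ) ^ 2 ^ d * ∑ h ∈ range N, T h ^ 2 ^ d * (N : ℝ) ^ (d + 1) := by
          rw [← sum_mul, mul_assoc]
      _ ≤ (2 * N : ℝ) ^ 2 ^ d * ∑ h ∈ range N, (2 * N : ℝ) ^ 2 ^ d *
            weylMajorant N d ((d + 2) * h * Q.coeff (d + 2)) :=
          mul_le_mul_of_nonneg_left (sum_le_sum fun h _ => induction_step h) (by positivity)
      _ = (2 * N : ℝ) ^ 2 ^ (d + 1) * weylMajorant N (d + 1) (Q.coeff (d + 2)) := by
          rw [← mul_sum, weylMajorant]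
          ring

end WeylDifferencing

section DivisorCollapsing

theorem sum_range_le_add_sum_Icc {f : ℕ → ℝ} (hf : ∀ h, 0 ≤ f h) (N : ℕ) :
    ∑ h ∈ range N, f h ≤ f 0 + ∑ h ∈ Icc 1 N, f h := by
  rw [← sum_insert (by simp : 0 ∉ Icc 1 N)]
  refine sum_le_sum_of_subset_of_nonneg (fun h hh => ?_) fun h _ _ => hf h
  simp only [mem_insert, mem_Icc, mem_range] at hh ⊢
  lia

theorem card_filter_mul_eq_le_card_divisors (A B : ℕ) {w : ℕ} (hw : w ≠ 0) :
    #{p ∈ Icc 1 A ×ˢ Icc 1 B | p.1 * p.2 = w} ≤ #w.divisors := by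
  calc #{p ∈ Icc 1 A ×ˢ Icc 1 B | p.1 * p.2 = w} ≤ #w.divisorsAntidiagonal :=
        card_le_card fun _ hp => Nat.mem_divisorsAntidiagonal.mpr ⟨(mem_filter.mp hp).2, hw⟩
    _ = #w.divisors := by rw [← Nat.map_div_right_divisors, card_map]

theorem sum_Icc_sum_Icc_mul_le {G : ℕ → ℝ} (hG : ∀ w, 0 ≤ G w) {A B : ℕ} {D : ℝ}
    (hD : ∀ w ≤ A * B, (#w.divisors : ℝ) ≤ D) :
    ∑ h ∈ Icc 1 A, ∑ z ∈ Icc 1 B, G (h * z) ≤ D * ∑ w ∈ Icc 1 (A * B), G w := by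
  have maps_to : ∀ p ∈ Icc 1 A ×ˢ Icc 1 B, p.1 * p.2 ∈ Icc 1 (A * B) := by
    intro p hp
    simp only [mem_product, mem_Icc] at hp ⊢
    exact ⟨Nat.mul_pos hp.1.1 hp.2.1, Nat.mul_le_mul hp.1.2 hp.2.2⟩
  rw [← sum_product', ← sum_fiberwise_of_maps_to maps_to, mul_sum]
  refine sum_le_sum fun w hw => ?_
  have hw' := mem_Icc.mp hw
  calc ∑ p ∈ Icc 1 A ×ˢ Icc 1 B with p.1 * p.2 = w, G (p.1 * p.2)
      = #{p ∈ Icc 1 A ×ˢ Icc 1 B | p.1 * p.2 = w} * G w := by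
        rw [← nsmul_eq_mul, ← sum_const]
        exact sum_congr rfl fun p hp => by rw [(mem_filter.mp hp).2]
    _ ≤ D * G w := by
        refine mul_le_mul_of_nonneg_right (le_trans ?_ (hD w hw'.2)) (hG w)
        exact mod_cast card_filter_mul_eq_le_card_divisors A B (by lia)

theorem sum_Icc_mul_left_le {G : ℕ → ℝ} (hG : ∀ w, 0 ≤ G w) {F : ℕ} (hF : 0 < F) (Z : ℕ) :
    ∑ z ∈ Icc 1 Z, G (F * z) ≤ ∑ w ∈ Icc 1 (F * Z), G w := by
  rw [← sum_image (g := (F * ·)) fun _ _ _ _ h => Nat.eq_of_mul_eq_mul_left hF h]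
  refine sum_le_sum_of_subset_of_nonneg (fun w hw => ?_) fun w _ _ => hG w
  obtain ⟨z, hz, rfl⟩ := mem_image.mp hw
  rw [mem_Icc] at hz ⊢
  exact ⟨Nat.mul_pos hF hz.1, Nat.mul_le_mul_left F hz.2⟩

theorem weylMajorant_succ_le (N d : ℕ) (a : ℝ) : weylMajorant N (d + 1) a ≤
    (N : ℝ) ^ (d + 1) + ∑ h ∈ Icc 1 N, weylMajorant N d ((d + 2) * h * a) :=
  (sum_range_le_add_sum_Icc (f := fun h => weylMajorant N d ((d + 2) * h * a))
    (fun _ => weylMajorant_nonneg _ _ _) N).trans (add_le_add_left (weylMajorant_le_pow _ _ _) _)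

-- Tuples with a vanishing shift are estimated trivially; the nonzero products `h₁ * ⋯ * h_d` take
-- each value `w` at most `D ^ d` times.
theorem weylMajorant_le_sum_geomBound {N d : ℕ} (hN : 1 ≤ N) {D : ℝ}
    (hD : ∀ w ≤ N ^ d, (#w.divisors : ℝ) ≤ D) (a : ℝ) :
    weylMajorant N d a ≤ d * (N : ℝ) ^ d +
      D ^ d * ∑ z ∈ Icc 1 (N ^ d), geomBound N ((((d + 1).factorial * z : ℕ) : ℝ) * a) := by
  have hD0 : 0 ≤ D := by simpa using hD 0 (Nat.zero_le _)
  induction d generalizing a with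
  | zero => simp [weylMajorant]
  | succ d ih =>
    set G : ℕ → ℝ := fun w => geomBound N ((((d + 2).factorial * w : ℕ) : ℝ) * a)
    have hD' (w : ℕ) (hw : w ≤ N ^ d) : (#w.divisors : ℝ) ≤ D :=
      hD w (hw.trans (Nat.pow_le_pow_right hN d.le_succ))
    have nonzero_shift (h : ℕ) : weylMajorant N d ((d + 2) * h * a) ≤
        d * (N : ℝ) ^ d + D ^ d * ∑ z ∈ Icc 1 (N ^ d), G (h * z) := by
      refine (ih hD' _).trans_eq ?_
      simp only [G]
      congr 2
      refine sum_congr rfl fun z _ => congrArg _ ?_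
      rw [Nat.factorial_succ (d + 1)]
      push_cast
      ring
    have collapse : ∑ h ∈ Icc 1 N, ∑ z ∈ Icc 1 (N ^ d), G (h * z) ≤
        D * ∑ w ∈ Icc 1 (N ^ (d + 1)), G w := by
      rw [pow_succ'] at hD ⊢
      exact sum_Icc_sum_Icc_mul_le (G := G) (fun _ => geomBound_nonneg _ _) hD
    calc weylMajorant N (d + 1) a
        ≤ (N : ℝ) ^ (d + 1) + ∑ h ∈ Icc 1 N, weylMajorant N d ((d + 2) * h * a) :=
          weylMajorant_succ_le N d a
      _ ≤ (N : ℝ) ^ (d + 1) +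
            ∑ h ∈ Icc 1 N, (d * (N : ℝ) ^ d + D ^ d * ∑ z ∈ Icc 1 (N ^ d), G (h * z)) := by
          gcongr with h
          exact nonzero_shift h
      _ = (d + 1) * (N : ℝ) ^ (d + 1) +
            D ^ d * ∑ h ∈ Icc 1 N, ∑ z ∈ Icc 1 (N ^ d), G (h * z) := by
          rw [sum_add_distrib, sum_const, Nat.card_Icc, Nat.add_sub_cancel, nsmul_eq_mul,
            ← mul_sum]
          ring
      _ ≤ (d + 1) * (N : ℝ) ^ (d + 1) + D ^ d * (D * ∑ w ∈ Icc 1 (N ^ (d + 1)), G w) := by gcongr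
      _ = (d + 1 : ℕ) * (N : ℝ) ^ (d + 1) + D ^ (d + 1) * ∑ w ∈ Icc 1 (N ^ (d + 1)), G w := by
          push_cast
          ring

end DivisorCollapsing

section Spacing

/-- A bound for `geomBound N a` when `s ≤ q * ‖a‖ + 2`. The values `s ≤ 2` carry no information on
`a`, so the trivial bound `N` is used for them. -/
noncomputable def residueBound (N q s : ℕ) : ℝ := if s ≤ 2 then N else 3 * q / s

theorem residueBound_nonneg (N q s : ℕ) : 0 ≤ residueBound N q s := by
  unfold residueBound
  positivity

theorem geomBound_le_residueBound (N : ℕ) {q s : ℕ} (hq : 0 < q) {a : ℝ}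
    (h : (s : ℝ) ≤ q * ‖(a : UnitAddCircle)‖ + 2) : geomBound N a ≤ residueBound N q s := by
  unfold residueBound
  split_ifs with hs
  · exact geomBound_le_natCast N a
  · have hs' : (3 : ℝ) ≤ s := mod_cast not_le.mp hs
    rw [← inv_div]
    refine geomBound_le_inv N (by positivity) ?_
    rw [div_le_iff₀ (by positivity)]
    linarith

theorem min_val_le_mul_norm_add {q : ℕ} [NeZero q] {c : ℤ} {x δ : ℝ} (h : |q * x - c| ≤ δ) :
    ((min (c : ZMod q).val (q - (c : ZMod q).val) : ℕ) : ℝ) ≤ q * ‖(x : UnitAddCircle)‖ + δ := by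
  set r := (c : ZMod q).val
  have hq : (0 : ℝ) < q := mod_cast NeZero.pos q
  have norm_residue : ‖((c / q : ℝ) : UnitAddCircle)‖ = ((min r (q - r) : ℕ) : ℝ) / q := by
    rw [← ZMod.toAddCircle_intCast, ZMod.toAddCircle_apply, UnitAddCircle.norm_eq,
      abs_sub_round_div_natCast_eq, Nat.mod_eq_of_lt (ZMod.val_lt _)]
  have close : ‖((c / q : ℝ) : UnitAddCircle) - (x : UnitAddCircle)‖ ≤ δ / q := by
    calc ‖((c / q : ℝ) : UnitAddCircle) - (x : UnitAddCircle)‖ ≤ |c / q - x| := by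
          rw [← AddCircle.coe_sub]
          exact QuotientAddGroup.norm_mk_le_norm
      _ = |q * x - c| / q := by
          rw [abs_sub_comm, ← abs_of_pos hq, ← abs_div, abs_of_pos hq]
          congr 1
          field_simp
      _ ≤ δ / q := by gcongr
  have triangle := norm_le_norm_add_norm_sub' ((c / q : ℝ) : UnitAddCircle) (x : UnitAddCircle)
  rw [norm_residue, div_le_iff₀ hq] at triangle
  calc ((min r (q - r) : ℕ) : ℝ)
      ≤ (‖(x : UnitAddCircle)‖ + ‖((c / q : ℝ) : UnitAddCircle) - (x : UnitAddCircle)‖) * q :=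
        triangle
    _ ≤ (‖(x : UnitAddCircle)‖ + δ / q) * q := by gcongr
    _ = q * ‖(x : UnitAddCircle)‖ + δ := by field_simp

theorem geomBound_le_residueBound_val_add (N : ℕ) {q : ℕ} [NeZero q] {c : ℤ} {x : ℝ}
    (h : |q * x - c| ≤ 2) : geomBound N x ≤
      residueBound N q (c : ZMod q).val + residueBound N q (q - (c : ZMod q).val) := by
  have hmin := geomBound_le_residueBound N (NeZero.pos q) (min_val_le_mul_norm_add h)
  rcases min_choice (c : ZMod q).val (q - (c : ZMod q).val) with hr | hr <;> rw [hr] at hmin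
  · exact hmin.trans (le_add_of_nonneg_right (residueBound_nonneg _ _ _))
  · exact hmin.trans (le_add_of_nonneg_left (residueBound_nonneg _ _ _))

theorem sum_range_succ_residueBound_le (N q : ℕ) :
    ∑ s ∈ range (q + 1), residueBound N q s ≤ 3 * N + 3 * q * (1 + Real.log q) := by
  have split (s : ℕ) : residueBound N q s ≤ (if s ∈ range 3 then (N : ℝ) else 0) + 3 * q / s := by
    have : (0 : ℝ) ≤ 3 * q / s := by positivity
    unfold residueBound
    split_ifs with h h' h' <;> simp only [mem_range] at h' <;> first | lia | linarith
  have small : ∑ s ∈ range (q + 1), (if s ∈ range 3 then (N : ℝ) else 0) ≤ 3 * N := by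
    rw [sum_ite_mem, sum_const, nsmul_eq_mul]
    gcongr
    exact mod_cast (card_le_card inter_subset_right).trans_eq (card_range 3)
  have harmonic_sum : ∑ s ∈ range (q + 1), 3 * (q : ℝ) / s ≤ 3 * q * (1 + Real.log q) := by
    have := harmonic_le_one_add_log q
    rw [harmonic, Rat.cast_sum] at this
    simp only [div_eq_mul_inv, ← mul_sum]
    refine mul_le_mul_of_nonneg_left ?_ (by positivity)
    rw [sum_range_succ']
    simpa using this
  calc ∑ s ∈ range (q + 1), residueBound N q s
      ≤ ∑ s ∈ range (q + 1), ((if s ∈ range 3 then (N : ℝ) else 0) + 3 * q / s) :=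
        sum_le_sum fun s _ => split s
    _ ≤ 3 * N + 3 * q * (1 + Real.log q) := by
        rw [sum_add_distrib]
        exact add_le_add small harmonic_sum

theorem sum_range_natCast_zmod {M : Type*} [AddCommMonoid M] (q : ℕ) [NeZero q] (F : ZMod q → M) :
    ∑ j ∈ range q, F j = ∑ x, F x :=
  sum_nbij' (fun j => (j : ZMod q)) ZMod.val (fun _ _ => mem_univ _)
    (fun x _ => mem_range.mpr x.val_lt) (fun _ hj => ZMod.val_cast_of_lt (mem_range.mp hj))
    (fun x _ => x.natCast_zmod_val) fun _ _ => rfl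

theorem sum_range_val_add_mul {M : Type*} [AddCommMonoid M] {q : ℕ} [NeZero q] {u : ℤ}
    (hu : IsCoprime u q) (b : ℤ) (F : ℕ → M) :
    ∑ j ∈ range q, F ((b + j * u : ℤ) : ZMod q).val = ∑ s ∈ range q, F s := by
  have hunit : IsUnit (u : ZMod q) := (ZMod.coe_int_isUnit_iff_isCoprime u q).mpr hu.symm
  have hbij : Function.Bijective fun x : ZMod q => (b : ZMod q) + x * u :=
    (AddGroup.addLeft_bijective _).comp (IsUnit.isUnit_iff_mulRight_bijective.mp hunit)
  push_cast
  rw [sum_range_natCast_zmod q fun x => F ((b : ZMod q) + x * u).val,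
    hbij.sum_comp fun x => F x.val, ← sum_range_natCast_zmod q fun x => F x.val]
  exact sum_congr rfl fun j hj => by rw [ZMod.val_cast_of_lt (mem_range.mp hj)]

theorem IsApproximant.abs_mul_add_mul_sub_le {t : ℝ} {u : ℤ} {q : ℕ} (h : IsApproximant t u q)
    (β : ℝ) {j : ℕ} (hj : j ≤ q) : |q * (β + j * t) - (⌊q * β⌋ + j * u : ℤ)| ≤ 2 := by
  obtain ⟨hq1, -, ht⟩ := h
  have hq : (0 : ℝ) < q := mod_cast hq1
  have drift : |q * j * (t - u / q)| ≤ 1 := by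
    rw [Int.cast_natCast] at ht
    rw [abs_mul, abs_of_nonneg (by positivity)]
    calc q * j * |t - u / q| ≤ q * q * (1 / (q : ℝ) ^ 2) := by gcongr
      _ = 1 := by field_simp
  calc |q * (β + j * t) - (⌊q * β⌋ + j * u : ℤ)|
      = |Int.fract (q * β) + q * j * (t - u / q)| := by
        rw [← Int.self_sub_floor]
        push_cast
        congr 1
        field_simp
        ring
    _ ≤ |Int.fract (q * β)| + |q * j * (t - u / q)| := abs_add_le _ _
    _ ≤ 1 + 1 := by
        gcongr
        rw [abs_of_nonneg (Int.fract_nonneg _)]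
        exact (Int.fract_lt_one _).le
    _ = 2 := one_add_one_eq_two

-- `q * (β + j * t)` stays close to `⌊q * β⌋ + j * u`, which runs over all residues modulo `q`.
theorem IsApproximant.sum_range_geomBound_le {t : ℝ} {u : ℤ} {q : ℕ} (h : IsApproximant t u q)
    (N : ℕ) (β : ℝ) :
    ∑ j ∈ range q, geomBound N (β + j * t) ≤ 6 * N + 6 * q * (1 + Real.log q) := by
  have : NeZero q := ⟨by have := h.1; lia⟩
  have hcop : IsCoprime u q := Int.isCoprime_iff_gcd_eq_one.mpr h.2.1
  set r : ℕ → ℕ := fun j => ((⌊q * β⌋ + j * u : ℤ) : ZMod q).val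
  have residues : ∑ j ∈ range q, residueBound N q (r j) ≤
      ∑ s ∈ range (q + 1), residueBound N q s := by
    rw [sum_range_val_add_mul hcop, sum_range_succ]
    exact le_add_of_nonneg_right (residueBound_nonneg _ _ _)
  have reflected : ∑ j ∈ range q, residueBound N q (q - r j) ≤
      ∑ s ∈ range (q + 1), residueBound N q s := by
    rw [sum_range_val_add_mul hcop _ fun s => residueBound N q (q - s),
      ← sum_range_reflect _ (q + 1), sum_range_succ, Nat.add_sub_cancel]
    exact le_add_of_nonneg_right (residueBound_nonneg _ _ _)
  calc ∑ j ∈ range q, geomBound N (β + j * t)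
      ≤ ∑ j ∈ range q, (residueBound N q (r j) + residueBound N q (q - r j)) :=
        sum_le_sum fun j hj => geomBound_le_residueBound_val_add N
          (h.abs_mul_add_mul_sub_le β (mem_range.mp hj).le)
    _ ≤ 6 * N + 6 * q * (1 + Real.log q) := by
        rw [sum_add_distrib]
        linarith [sum_range_succ_residueBound_le N q]

theorem IsApproximant.sum_Icc_geomBound_le {t : ℝ} {u : ℤ} {q : ℕ} (h : IsApproximant t u q)
    (N H : ℕ) : ∑ w ∈ Icc 1 H, geomBound N (w * t) ≤
      (H / q + 1) * (6 * N + 6 * q * (1 + Real.log q)) := by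
  have hq : 0 < q := by have := h.1; lia
  have blocks (B : ℕ) : ∑ w ∈ range (B * q), geomBound N (w * t) ≤
      B * (6 * N + 6 * q * (1 + Real.log q)) := by
    induction B with
    | zero => simp
    | succ B ih =>
      have block := h.sum_range_geomBound_le N ((B * q : ℕ) * t)
      rw [add_mul, one_mul, sum_range_add, Nat.cast_succ, add_one_mul]
      simp only [Nat.cast_add, add_mul] at block ⊢
      exact add_le_add ih block
  have subset : Icc 1 H ⊆ range ((H / q + 1) * q) := fun w hw => by
    have := Nat.lt_div_mul_add hq (a := H)
    rw [mem_Icc] at hw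
    rw [mem_range, add_one_mul]
    lia
  calc ∑ w ∈ Icc 1 H, geomBound N (w * t)
      ≤ ∑ w ∈ range ((H / q + 1) * q), geomBound N (w * t) :=
        sum_le_sum_of_subset_of_nonneg subset fun _ _ _ => geomBound_nonneg _ _
    _ ≤ (H / q + 1 : ℕ) * (6 * N + 6 * q * (1 + Real.log q)) := blocks _
    _ ≤ (H / q + 1) * (6 * N + 6 * q * (1 + Real.log q)) := by
        have := Real.log_natCast_nonneg q
        push_cast
        gcongr
        exact Nat.cast_div_le

end Spacing

section WeylInequality

open scoped Polynomial

theorem one_add_log_le_mul_rpow {k : ℕ} {ε x y : ℝ} (hε : 0 < ε) (hx : 1 ≤ x) (hy : 0 < y)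
    (hyx : y ≤ x ^ k) : 1 + Real.log y ≤ (1 + k / ε) * x ^ ε := by
  have hlog : Real.log y ≤ k * (x ^ ε / ε) := by
    calc Real.log y ≤ Real.log (x ^ k) := Real.log_le_log hy hyx
      _ = k * Real.log x := Real.log_pow x k
      _ ≤ k * (x ^ ε / ε) := by
        gcongr
        exact Real.log_le_rpow_div (by linarith) hε
  calc 1 + Real.log y ≤ x ^ ε + k * (x ^ ε / ε) := add_le_add (Real.one_le_rpow hx hε.le) hlog
    _ = (1 + k / ε) * x ^ ε := by ring

theorem exists_card_divisors_le_and_pow_le {d : ℕ} (hd : 1 ≤ d) {ε : ℝ} (hε : 0 < ε) :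
    ∃ C : ℝ, 1 ≤ C ∧ ∀ N : ℕ, ∃ D : ℝ,
      (∀ w ≤ N ^ d, (#w.divisors : ℝ) ≤ D) ∧ D ^ d ≤ C * (N : ℝ) ^ ε := by
  have : (0 : ℝ) < d := mod_cast hd
  obtain ⟨C, hC, hdiv⟩ := exists_card_divisors_le_mul_rpow (ε := ε / (d * d)) (by positivity)
  refine ⟨C ^ d, one_le_pow₀ hC, fun N => ⟨C * ((N : ℝ) ^ d) ^ (ε / (d * d)), fun w hw => ?_, ?_⟩⟩
  · have : (w : ℝ) ≤ (N : ℝ) ^ d := mod_cast hw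
    exact (hdiv w).trans (by gcongr)
  · rw [mul_pow, ← Real.rpow_natCast (N : ℝ) d, ← Real.rpow_mul N.cast_nonneg,
      ← Real.rpow_mul_natCast N.cast_nonneg]
    refine le_of_eq ?_
    congr 2
    field_simp

theorem IsApproximant.sum_Icc_geomBound_mul_le {t : ℝ} {u : ℤ} {q : ℕ} (h : IsApproximant t u q)
    {N F d : ℕ} (hN : 1 ≤ N) (hF : 1 ≤ F) (hd : 1 ≤ d) :
    ∑ z ∈ Icc 1 (N ^ d), geomBound N (((F * z : ℕ) : ℝ) * t) ≤ 12 * F * (1 + Real.log q) *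
      ((N : ℝ) ^ (d + 1) * (1 / q + 1 / N + q / (N : ℝ) ^ (d + 1))) := by
  have hq : (0 : ℝ) < q := mod_cast h.1
  have : (0 : ℝ) < N := mod_cast hN
  have hlog : 0 ≤ Real.log q := Real.log_natCast_nonneg q
  have hNd : (N : ℝ) ≤ F * (N : ℝ) ^ d := mod_cast
    (Nat.le_self_pow (by lia) N).trans (Nat.le_mul_of_pos_left _ hF)
  have hFq : (q : ℝ) ≤ F * q := mod_cast Nat.le_mul_of_pos_left q hF
  calc ∑ z ∈ Icc 1 (N ^ d), geomBound N (((F * z : ℕ) : ℝ) * t)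
      ≤ ∑ w ∈ Icc 1 (F * N ^ d), geomBound N (w * t) :=
        sum_Icc_mul_left_le (G := fun w => geomBound N (w * t)) (fun _ => geomBound_nonneg _ _) hF _
    _ ≤ ((F * N ^ d : ℕ) / q + 1) * (6 * N + 6 * q * (1 + Real.log q)) :=
        h.sum_Icc_geomBound_le N _
    _ ≤ ((F * N ^ d : ℕ) / q + 1) * (6 * N * (1 + Real.log q) + 6 * q * (1 + Real.log q)) := by
        gcongr ?_ * (?_ + _)
        exact le_mul_of_one_le_right (by positivity) (by linarith)
    _ = 6 * (1 + Real.log q) * (F * (N : ℝ) ^ (d + 1) / q + F * (N : ℝ) ^ d + N + q) := by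
        push_cast
        field_simp
        ring
    _ ≤ 6 * (1 + Real.log q) *
          (2 * (F * (N : ℝ) ^ (d + 1) / q + F * (N : ℝ) ^ d + F * q)) := by
        have : 0 ≤ F * (N : ℝ) ^ (d + 1) / q := by positivity
        gcongr
        linarith
    _ = 12 * F * (1 + Real.log q) *
          ((N : ℝ) ^ (d + 1) * (1 / q + 1 / N + q / (N : ℝ) ^ (d + 1))) := by
        field_simp
        ring

theorem exists_weylMajorant_le {d : ℕ} (hd : 1 ≤ d) {ε : ℝ} (hε : 0 < ε) :
    ∃ C : ℝ, 0 ≤ C ∧ ∀ (N : ℕ) (t : ℝ) (u : ℤ) (q : ℕ), 1 ≤ N → IsApproximant t u q →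
      q ≤ N ^ (d + 1) → weylMajorant N d t ≤
        C * (N : ℝ) ^ ε * ((N : ℝ) ^ (d + 1) * (1 / q + 1 / N + q / (N : ℝ) ^ (d + 1))) := by
  obtain ⟨C₀, hC₀, hdiv⟩ := exists_card_divisors_le_and_pow_le hd (half_pos hε)
  set C₁ : ℝ := 1 + (d + 1 : ℕ) / (ε / 2)
  set F : ℕ := (d + 1).factorial
  refine ⟨d + C₀ * (12 * F * C₁), by positivity, fun N t u q hN happ hqN => ?_⟩
  set B : ℝ := (N : ℝ) ^ (d + 1) * (1 / q + 1 / N + q / (N : ℝ) ^ (d + 1))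
  have hN1 : (1 : ℝ) ≤ N := mod_cast hN
  have hq : (0 : ℝ) < q := mod_cast happ.1
  obtain ⟨D, hD, hDd⟩ := hdiv N
  have hD0 : 0 ≤ D := by simpa using hD 0 (Nat.zero_le _)
  have zero_shifts : (N : ℝ) ^ d ≤ (N : ℝ) ^ ε * B := by
    calc (N : ℝ) ^ d = (N : ℝ) ^ (d + 1) * (1 / N) := by
          field_simp
          ring
      _ ≤ B := by
          refine mul_le_mul_of_nonneg_left ?_ (by positivity)
          have : 0 ≤ 1 / (q : ℝ) + q / (N : ℝ) ^ (d + 1) := by positivity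
          linarith
      _ ≤ (N : ℝ) ^ ε * B :=
        le_mul_of_one_le_left (by positivity) (Real.one_le_rpow hN1 hε.le)
  have hlog : 1 + Real.log q ≤ C₁ * (N : ℝ) ^ (ε / 2) :=
    one_add_log_le_mul_rpow (half_pos hε) hN1 hq (mod_cast hqN)
  calc weylMajorant N d t
      ≤ d * (N : ℝ) ^ d + D ^ d * ∑ z ∈ Icc 1 (N ^ d), geomBound N (((F * z : ℕ) : ℝ) * t) :=
        weylMajorant_le_sum_geomBound hN hD t
    _ ≤ d * ((N : ℝ) ^ ε * B) + D ^ d * (12 * F * (1 + Real.log q) * B) := by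
        gcongr
        exact happ.sum_Icc_geomBound_mul_le hN (Nat.factorial_pos _) hd
    _ ≤ d * ((N : ℝ) ^ ε * B) +
          C₀ * (N : ℝ) ^ (ε / 2) * (12 * F * (C₁ * (N : ℝ) ^ (ε / 2)) * B) := by
        have := Real.log_natCast_nonneg q
        gcongr
    _ = (d + C₀ * (12 * F * C₁)) * (N : ℝ) ^ ε * B := by
        rw [← add_halves ε, Real.rpow_add (by linarith), add_halves]
        ring

theorem exists_pow_norm_sum_range_ee_eval_le {d : ℕ} (hd : 1 ≤ d) {ε : ℝ}
    (hε : 0 < ε) : ∃ C : ℝ, 1 ≤ C ∧ ∀ (N : ℕ) (Q : ℝ[X]) (u : ℤ) (q : ℕ), 1 ≤ N →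
      Q.natDegree ≤ d + 1 → IsApproximant (Q.coeff (d + 1)) u q →
      ‖∑ k ∈ range N, ee (Q.eval (k : ℝ))‖ ^ 2 ^ d ≤
        C * (N : ℝ) ^ ε * ((N : ℝ) ^ 2 ^ d * (1 / q + 1 / N + q / (N : ℝ) ^ (d + 1))) := by
  obtain ⟨C, hC, hmajorant⟩ := exists_weylMajorant_le hd hε
  refine ⟨1 + 2 ^ 2 ^ d * C, by linarith [show 0 ≤ 2 ^ 2 ^ d * C by positivity],
    fun N Q u q hN hQ happ => ?_⟩
  set S := ‖∑ k ∈ range N, ee (Q.eval (k : ℝ))‖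
  set R : ℝ := 1 / q + 1 / N + q / (N : ℝ) ^ (d + 1)
  have hN1 : (1 : ℝ) ≤ N := mod_cast hN
  have hε1 : 1 ≤ (N : ℝ) ^ ε := Real.one_le_rpow hN1 hε.le
  rcases le_or_gt q (N ^ (d + 1)) with hqN | hqN
  · have weyl : S ^ 2 ^ d * (N : ℝ) ^ (d + 1) ≤
        2 ^ 2 ^ d * C * (N : ℝ) ^ ε * ((N : ℝ) ^ 2 ^ d * R) * (N : ℝ) ^ (d + 1) := by
      calc S ^ 2 ^ d * (N : ℝ) ^ (d + 1)
          ≤ (2 * N : ℝ) ^ 2 ^ d * weylMajorant N d (Q.coeff (d + 1)) :=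
            pow_norm_sum_range_ee_eval_le le_rfl hQ
        _ ≤ (2 * N : ℝ) ^ 2 ^ d * (C * (N : ℝ) ^ ε * ((N : ℝ) ^ (d + 1) * R)) := by
            gcongr
            exact hmajorant N _ u q hN happ hqN
        _ = 2 ^ 2 ^ d * C * (N : ℝ) ^ ε * ((N : ℝ) ^ 2 ^ d * R) * (N : ℝ) ^ (d + 1) := by ring
    refine (le_of_mul_le_mul_right weyl (by positivity)).trans ?_
    gcongr
    linarith
  · have hR : 1 ≤ R := by
      have : 1 ≤ (q : ℝ) / (N : ℝ) ^ (d + 1) := by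
        rw [one_le_div (by positivity)]
        exact mod_cast hqN.le
      exact this.trans (le_add_of_nonneg_left (by positivity))
    calc S ^ 2 ^ d ≤ (N : ℝ) ^ 2 ^ d :=
          pow_le_pow_left₀ (norm_nonneg _) (norm_sum_range_ee_le _ N) _
      _ ≤ 1 * 1 * ((N : ℝ) ^ 2 ^ d * R) := by
          rw [one_mul, one_mul]
          exact le_mul_of_one_le_right (by positivity) hR
      _ ≤ (1 + 2 ^ 2 ^ d * C) * (N : ℝ) ^ ε * ((N : ℝ) ^ 2 ^ d * R) := by
          gcongr
          exact le_add_of_nonneg_right (by positivity)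

theorem inv_add_inv_add_div_le_rpow_neg_min {k : ℕ} {Δ N q : ℝ} (hN : 1 ≤ N) (hq : N ^ Δ < q)
    (hq' : q ≤ N ^ (k - Δ)) : 1 / q + 1 / N + q / N ^ k ≤ 3 * N ^ (-min Δ 1) := by
  have hN0 : 0 < N := by linarith
  have h1 : 1 / q ≤ N ^ (-min Δ 1) := by
    calc 1 / q ≤ 1 / N ^ Δ := by gcongr
      _ = N ^ (-Δ) := by rw [Real.rpow_neg hN0.le, one_div]
      _ ≤ N ^ (-min Δ 1) := by
        gcongr
        exact min_le_left _ _
  have h2 : 1 / N ≤ N ^ (-min Δ 1) := by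
    calc 1 / N = N ^ (-1 : ℝ) := by rw [Real.rpow_neg_one, one_div]
      _ ≤ N ^ (-min Δ 1) := by
        gcongr
        exact min_le_right _ _
  have h3 : q / N ^ k ≤ N ^ (-min Δ 1) := by
    calc q / N ^ k ≤ N ^ (k - Δ) / N ^ k := by gcongr
      _ = N ^ (-Δ) := by
        rw [← Real.rpow_natCast N k, ← Real.rpow_sub hN0]
        congr 1
        ring
      _ ≤ N ^ (-min Δ 1) := by
        gcongr
        exact min_le_left _ _
  linarith

theorem exists_norm_sum_range_ee_eval_le_rpow {d : ℕ} (hd : 1 ≤ d) {Δ : ℝ}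
    (hΔ0 : 0 < Δ) (hΔ2 : Δ < 2) : ∃ C : ℝ, 1 ≤ C ∧ ∀ (N : ℕ) (Q : ℝ[X]) (u : ℤ) (q : ℕ), 1 ≤ N →
      Q.natDegree ≤ d + 1 → IsApproximant (Q.coeff (d + 1)) u q → (N : ℝ) ^ Δ < q →
      q ≤ (N : ℝ) ^ ((d + 1 : ℕ) - Δ) →
      ‖∑ k ∈ range N, ee (Q.eval (k : ℝ))‖ ≤ C * (N : ℝ) ^ (1 - Δ / 2 ^ (d + 1)) := by
  -- The rational approximation saves `N ^ (-min Δ 1)`, of which only `N ^ (-Δ / 2)` is claimed; the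
  -- difference absorbs the loss of `N ^ ε`.
  have hε : 0 < min Δ 1 - Δ / 2 := sub_pos.mpr (lt_min (by linarith) (by linarith))
  obtain ⟨C, hC, hweyl⟩ := exists_pow_norm_sum_range_ee_eval_le hd hε
  refine ⟨3 * C, by linarith, fun N Q u q hN hQ happ hq hq' => ?_⟩
  have hN0 : (0 : ℝ) < N := mod_cast hN
  refine le_of_pow_le_pow_left₀ (n := 2 ^ d) (by positivity) (by positivity) ?_
  have exponents : (N : ℝ) ^ (min Δ 1 - Δ / 2) * ((N : ℝ) ^ 2 ^ d * (N : ℝ) ^ (-min Δ 1)) =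
      ((N : ℝ) ^ (1 - Δ / 2 ^ (d + 1))) ^ 2 ^ d := by
    rw [← Real.rpow_natCast, ← Real.rpow_mul_natCast hN0.le, ← Real.rpow_add hN0,
      ← Real.rpow_add hN0]
    congr 1
    push_cast
    field_simp
    ring
  calc ‖∑ k ∈ range N, ee (Q.eval (k : ℝ))‖ ^ 2 ^ d
      ≤ C * (N : ℝ) ^ (min Δ 1 - Δ / 2) *
          ((N : ℝ) ^ 2 ^ d * (1 / q + 1 / N + q / (N : ℝ) ^ (d + 1))) :=
        hweyl N Q u q hN hQ happ
    _ ≤ C * (N : ℝ) ^ (min Δ 1 - Δ / 2) * ((N : ℝ) ^ 2 ^ d * (3 * (N : ℝ) ^ (-min Δ 1))) := by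
        gcongr
        exact inv_add_inv_add_div_le_rpow_neg_min (mod_cast hN) hq hq'
    _ = 3 * C * ((N : ℝ) ^ (1 - Δ / 2 ^ (d + 1))) ^ 2 ^ d := by
        rw [← exponents]
        ring
    _ ≤ (3 * C) ^ 2 ^ d * ((N : ℝ) ^ (1 - Δ / 2 ^ (d + 1))) ^ 2 ^ d := by
        gcongr
        exact le_self_pow₀ (by linarith) (by positivity)
    _ = (3 * C * (N : ℝ) ^ (1 - Δ / 2 ^ (d + 1))) ^ 2 ^ d := (mul_pow _ _ _).symm

theorem exists_norm_sum_range_ee_eval_le_rpow_of_forall {n : ℕ} (hn : 2 ≤ n) {Δ : ℝ} (hΔ0 : 0 < Δ)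
    (hΔ2 : Δ < 2) (m : ℝ) : ∃ C > (0 : ℝ), ∀ Q : ℝ[X], Q.natDegree ≤ n →
      (∀ M : ℝ, m ≤ M →
        ∃ u q : ℤ, IsApproximant (Q.coeff n) u q ∧ M ^ Δ < q ∧ q ≤ M ^ ((n : ℝ) - Δ)) →
      ∀ j : ℕ, ‖∑ k ∈ range j, ee (Q.eval (k : ℝ))‖ ≤ C * (j : ℝ) ^ (1 - Δ / 2 ^ n) := by
  obtain ⟨d, rfl⟩ : ∃ d, n = d + 1 := ⟨n - 1, by lia⟩
  obtain ⟨C, hC, hsum⟩ := exists_norm_sum_range_ee_eval_le_rpow (d := d) (by lia) hΔ0 hΔ2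
  refine ⟨C + |m|, by positivity, fun Q hQ happ j => ?_⟩
  rcases j.eq_zero_or_pos with rfl | hj
  · rw [range_zero, sum_empty, norm_zero]
    positivity
  rcases le_or_gt m j with hmj | hjm
  · obtain ⟨u, q, hq, hlower, hupper⟩ := happ j hmj
    lift q to ℕ using by linarith [hq.1]
    refine (hsum j Q u q hj hQ hq hlower hupper).trans ?_
    gcongr
    exact le_add_of_nonneg_right (abs_nonneg m)
  · have hδ : Δ / 2 ^ (d + 1) ≤ 1 := by
      rw [div_le_one₀ (by positivity)]
      exact hΔ2.le.trans (le_self_pow₀ one_le_two d.succ_ne_zero)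
    have hj1 : 1 ≤ (j : ℝ) ^ (1 - Δ / 2 ^ (d + 1)) :=
      Real.one_le_rpow (mod_cast hj) (sub_nonneg.mpr hδ)
    calc ‖∑ k ∈ range j, ee (Q.eval (k : ℝ))‖ ≤ j := norm_sum_range_ee_le _ j
      _ ≤ C + |m| := by linarith [le_abs_self m]
      _ ≤ (C + |m|) * (j : ℝ) ^ (1 - Δ / 2 ^ (d + 1)) :=
        le_mul_of_one_le_right (by positivity) hj1

end WeylInequality

section WeightedSums

open scoped Polynomial

theorem norm_sum_Icc_ee_eval_div_le {Q : ℝ[X]} {a : ℤ} (ha : 1 ≤ a) {δ C : ℝ} (hδ0 : 0 < δ)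
    (hδ1 : δ ≤ 1) (hC : 0 ≤ C)
    (hQ : ∀ j : ℕ, ‖∑ i ∈ range j, ee ((Polynomial.taylor (a : ℝ) Q).eval (i : ℝ))‖ ≤
      C * (j : ℝ) ^ (1 - δ)) (b : ℤ) :
    ‖∑ k ∈ Icc a b, ee (Q.eval (k : ℝ)) / (k : ℂ)‖ ≤ C / δ * (a : ℝ) ^ (-δ) := by
  have shift : ∑ k ∈ Icc a b, ee (Q.eval (k : ℝ)) / (k : ℂ) =
      ∑ i ∈ range (b + 1 - a).toNat,
        ((a : ℝ) + i)⁻¹ • ee ((Polynomial.taylor (a : ℝ) Q).eval (i : ℝ)) := by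
    rw [Int.Icc_eq_finset_map, sum_map]
    refine sum_congr rfl fun i _ => ?_
    simp [Polynomial.taylor_eval, add_comm, div_eq_inv_mul]
  rw [shift]
  exact norm_sum_range_inv_smul_le hδ0 hδ1 hC (mod_cast ha) hQ _

theorem exists_norm_sum_Icc_ee_eval_div_le_rpow {n : ℕ} (hn : 2 ≤ n) {Δ : ℝ} (hΔ0 : 0 < Δ)
    (hΔ2 : Δ < 2) (m : ℝ) :
    ∃ C > (0 : ℝ), ∀ Q : ℝ[X], Q.natDegree ≤ n →
      (∀ M : ℝ, m ≤ M →
        ∃ u q : ℤ, IsApproximant (Q.coeff n) u q ∧ M ^ Δ < q ∧ q ≤ M ^ ((n : ℝ) - Δ)) →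
      ∀ K L : ℝ, 0 < K →
        ‖∑ k ∈ Icc (⌊K⌋ + 1) ⌊L⌋, ee (Q.eval (k : ℝ)) / (k : ℂ)‖ ≤ C * K ^ (-(Δ / 2 ^ n)) := by
  obtain ⟨C, hC, hpartial⟩ := exists_norm_sum_range_ee_eval_le_rpow_of_forall hn hΔ0 hΔ2 m
  have hδ0 : 0 < Δ / 2 ^ n := by positivity
  have hδ1 : Δ / 2 ^ n ≤ 1 := by
    rw [div_le_one₀ (by positivity)]
    exact hΔ2.le.trans (le_self_pow₀ one_le_two (by lia))
  refine ⟨C / (Δ / 2 ^ n), by positivity, fun Q hQ happ K L hK => ?_⟩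
  calc ‖∑ k ∈ Icc (⌊K⌋ + 1) ⌊L⌋, ee (Q.eval (k : ℝ)) / (k : ℂ)‖
      ≤ C / (Δ / 2 ^ n) * ((⌊K⌋ + 1 : ℤ) : ℝ) ^ (-(Δ / 2 ^ n)) := by
        refine norm_sum_Icc_ee_eval_div_le (by linarith [Int.floor_nonneg.mpr hK.le]) hδ0 hδ1 hC.le
          (hpartial _ ((Polynomial.natDegree_taylor Q _).trans_le hQ) ?_) ⌊L⌋
        rwa [coeff_taylor_of_natDegree_le hQ]
    _ ≤ C / (Δ / 2 ^ n) * K ^ (-(Δ / 2 ^ n)) := by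
        refine mul_le_mul_of_nonneg_left ?_ (by positivity)
        push_cast
        exact Real.rpow_le_rpow_of_nonpos hK (Int.lt_floor_add_one K).le (by linarith)

theorem natDegree_C_mul_add_C_mul_X_le {R : Type*} [Semiring R] {n : ℕ} (hn : 1 ≤ n) {P : R[X]}
    (hP : P.natDegree ≤ n) (t x : R) :
    (Polynomial.C t * P + Polynomial.C x * Polynomial.X).natDegree ≤ n :=
  Polynomial.natDegree_add_le_of_degree_le ((Polynomial.natDegree_C_mul_le t P).trans hP)
    (((Polynomial.natDegree_C_mul_le x _).trans Polynomial.natDegree_X_le).trans hn)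

theorem coeff_C_mul_add_C_mul_X {R : Type*} [Semiring R] {P : R[X]} (hP : P.Monic)
    (hn : 2 ≤ P.natDegree) (t x : R) :
    (Polynomial.C t * P + Polynomial.C x * Polynomial.X).coeff P.natDegree = t := by
  rw [Polynomial.coeff_add, Polynomial.coeff_C_mul, hP.coeff_natDegree, mul_one,
    Polynomial.coeff_C_mul, Polynomial.coeff_X_of_ne_one (by lia), mul_zero, add_zero]

end WeightedSums

theorem stmt14_general {n : ℕ} (hn : 2 ≤ n) {Δ : ℝ} (hΔ0 : 0 < Δ) (hΔ2 : Δ < 2) (m : ℝ) :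
    ∃ C > (0 : ℝ), ∀ t : ℝ,
      (∀ M : ℝ, m ≤ M → ∃ u q : ℤ, IsApproximant t u q ∧ M ^ Δ < q ∧ q ≤ M ^ ((n : ℝ) - Δ)) →
      ∀ P : Polynomial ℝ, P.Monic → P.natDegree = n → ∀ x K L : ℝ, 0 < K →
        ‖∑ k ∈ Icc (⌊K⌋ + 1) ⌊L⌋, ee (t * P.eval (k : ℝ) + x * (k : ℝ)) / (k : ℂ)‖ ≤
          C * K ^ (-(Δ / 2 ^ n)) := by
  obtain ⟨C, hC, hbound⟩ := exists_norm_sum_Icc_ee_eval_div_le_rpow hn hΔ0 hΔ2 m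
  refine ⟨C, hC, ?_⟩
  rintro t ht P hP rfl x K L hK
  simpa using hbound (Polynomial.C t * P + Polynomial.C x * Polynomial.X)
    (natDegree_C_mul_add_C_mul_X_le (by lia) le_rfl t x)
    (by rwa [coeff_C_mul_add_C_mul_X hP hn]) K L hK

/-- with `δ = Δ/2^n` there is `C > 0`, depending only on `n`, `Δ` and `m`,
such that for every `t ∈ 𝒜_m`, every monic real polynomial `P` of degree `n`, every real `x`
and all `K, L` with `m < K` and `K + m < L`,
`|Σ_{K<k≤L} e(t·P(k) + x·k)/k| ≤ C·(K^{−δ} + L^{−δ})`. -/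
theorem stmt14 (n : ℕ) (hn : 2 ≤ n) (Δ : ℝ) (hΔ0 : 0 < Δ) (hΔ1 : Δ < 1)
    (hΔ2 : n = 2 → Δ < 1 / 2) (m : ℤ) (hm : 2 ≤ m) :
    ∃ C > (0 : ℝ), ∀ t ∈ Aset n Δ m, ∀ P : Polynomial ℝ, P.Monic → P.natDegree = n →
      ∀ x K L : ℝ, (m : ℝ) < K → K + (m : ℝ) < L →
        ‖∑ k ∈ Finset.Icc (⌊K⌋ + 1) ⌊L⌋,
            ee (t * P.eval (k : ℝ) + x * (k : ℝ)) / (k : ℂ)‖ ≤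
          C * (K ^ (-(Δ / 2 ^ n)) + L ^ (-(Δ / 2 ^ n))) := by
  have hm' : (2 : ℝ) ≤ m := mod_cast hm
  obtain ⟨C, hC, hbound⟩ := stmt14_general hn hΔ0 (hΔ1.trans one_lt_two) m
  exact ⟨C, hC, fun t ht P hP hdeg x K L hK hKL =>
    (hbound t ht.2 P hP hdeg x K L (by linarith)).trans (mul_le_mul_of_nonneg_left
      (le_add_of_nonneg_right (Real.rpow_nonneg (by linarith) _)) hC.le)⟩
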